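/- arXiv:2504.08317 — 3 statements merged into one kernel-verified Lean document; each statement's English description precedes it below -/
import Mathlib

section
/- Let (F, ‖·‖) be a normed real vector space, and let {Jⁿ}_{n∈ℕ} and J be linear maps from F into L¹(Ω) for a probability space (Ω, 𝔉, ℙ). Assume there is a constant C > 0 such that sup_{n≥1} E[|Jⁿ(f)|] ≤ C‖f‖ and E[|J(f)|] ≤ C‖f‖ for every f ∈ F, and assume there is a subset D ⊂ F, dense with respect to ‖·‖, such that for every f ∈ D the random variables Jⁿ(f) converge in distribution to J(f) as n → ∞. Then for every f ∈ F, Jⁿ(f) converges in distribution to J(f) as n → ∞. -/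
open MeasureTheory Filter Topology

/-!
Convergence in distribution is tested on bounded Lipschitz functions `g`. For such a `g` the
functional `u ↦ ∫ g(u) dμ` is Lipschitz on `L¹(μ)`, so composing it with the maps `Jⁿ` and `J`,
which are Lipschitz with a common constant, gives an equicontinuous sequence of scalar functions on
`F` and a continuous candidate limit. The points at which an equicontinuous sequence converges to a
given continuous function form a closed set, and here that set contains the dense set `D`.
-/

section Lipschitz

variable {Ω E G : Type*} [MeasurableSpace Ω] {μ : Measure Ω}
  [NormedAddCommGroup E] [NormedAddCommGroup G]

lemma integrable_comp_of_lipschitzWith [IsFiniteMeasure μ] {K : NNReal} {g : E → G}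
    (hg : LipschitzWith K g) {u : Ω → E} (hu : Integrable u μ) :
    Integrable (fun ω => g (u ω)) μ := by
  have h_lip : LipschitzWith K (fun x => g x - g 0) := by
    simpa using hg.sub (LipschitzWith.const (g 0))
  have h_int : Integrable (fun ω => g (u ω) - g 0) μ :=
    memLp_one_iff_integrable.1 (h_lip.comp_memLp (sub_self _) (memLp_one_iff_integrable.2 hu))
  simpa only [Pi.add_def, sub_add_cancel] using h_int.add (integrable_const (g 0))

lemma lipschitzWith_integral_comp [NormedSpace ℝ G] [IsFiniteMeasure μ] {K : NNReal} {g : E → G}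
    (hg : LipschitzWith K g) : LipschitzWith K (fun u : Lp E 1 μ => ∫ ω, g (u ω) ∂μ) := by
  refine LipschitzWith.of_dist_le_mul fun u v => ?_
  have hu := integrable_comp_of_lipschitzWith hg (L1.integrable_coeFn u)
  have hv := integrable_comp_of_lipschitzWith hg (L1.integrable_coeFn v)
  have h_dist : Integrable (fun ω => dist (u ω) (v ω)) μ := by
    simpa only [dist_eq_norm, Pi.sub_apply] using
      ((L1.integrable_coeFn u).sub (L1.integrable_coeFn v)).norm
  calc dist (∫ ω, g (u ω) ∂μ) (∫ ω, g (v ω) ∂μ)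
      = ‖∫ ω, (g (u ω) - g (v ω)) ∂μ‖ := by rw [dist_eq_norm, integral_sub hu hv]
    _ ≤ ∫ ω, K * dist (u ω) (v ω) ∂μ :=
        norm_integral_le_of_norm_le (h_dist.const_mul K) <| ae_of_all μ fun ω => by
          simpa only [dist_eq_norm] using hg.dist_le_mul (u ω) (v ω)
    _ = K * dist u v := by rw [integral_const_mul, L1.dist_eq_integral_dist]

lemma lipschitzWith_of_integral_norm_le {F 𝓕 : Type*} [SeminormedAddCommGroup F]
    [FunLike 𝓕 F (Lp E 1 μ)] [AddMonoidHomClass 𝓕 F (Lp E 1 μ)] (T : 𝓕) {C : ℝ}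
    (hT : ∀ f, ∫ ω, ‖T f ω‖ ∂μ ≤ C * ‖f‖) : LipschitzWith C.toNNReal T :=
  AddMonoidHomClass.lipschitz_of_bound T C fun f => (L1.norm_eq_integral_norm (T f)).trans_le (hT f)

end Lipschitz

section TestFunctions

variable {ι E Ω' : Type*} {Ω : ι → Type*} [∀ i, MeasurableSpace (Ω i)] [MeasurableSpace Ω']
  {μ : ∀ i, Measure (Ω i)} {μ' : Measure Ω'} [MeasurableSpace E]
  {X : ∀ i, Ω i → E} {Z : Ω' → E} {l : Filter ι}

lemma tendsto_integral_map_iff [TopologicalSpace E] [OpensMeasurableSpace E]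
    (hX : ∀ i, AEMeasurable (X i) (μ i)) (hZ : AEMeasurable Z μ') {g : E → ℝ} (hg : Continuous g) :
    Tendsto (fun i => ∫ x, g x ∂(μ i).map (X i)) l (𝓝 (∫ x, g x ∂μ'.map Z)) ↔
      Tendsto (fun i => ∫ ω, g (X i ω) ∂μ i) l (𝓝 (∫ ω, g (Z ω) ∂μ')) := by
  have h_meas (ν : Measure E) : AEStronglyMeasurable g ν := hg.measurable.aestronglyMeasurable
  simp only [integral_map (hX _) (h_meas _), integral_map hZ (h_meas _)]

variable [∀ i, IsProbabilityMeasure (μ i)] [IsProbabilityMeasure μ']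

lemma tendstoInDistribution_iff_tendsto_law [TopologicalSpace E] [OpensMeasurableSpace E]
    (hX : ∀ i, AEMeasurable (X i) (μ i)) (hZ : AEMeasurable Z μ') :
    TendstoInDistribution X l Z μ μ' ↔ Tendsto (β := ProbabilityMeasure E)
      (fun i => ⟨(μ i).map (X i), Measure.isProbabilityMeasure_map (hX i)⟩) l
      (𝓝 ⟨μ'.map Z, Measure.isProbabilityMeasure_map hZ⟩) :=
  ⟨fun h => h.tendsto, fun h => ⟨hX, hZ, h⟩⟩

lemma tendstoInDistribution_iff_forall_integral_tendsto [TopologicalSpace E]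
    [OpensMeasurableSpace E] (hX : ∀ i, AEMeasurable (X i) (μ i)) (hZ : AEMeasurable Z μ') :
    TendstoInDistribution X l Z μ μ' ↔ ∀ g : BoundedContinuousFunction E ℝ,
      Tendsto (fun i => ∫ ω, g (X i ω) ∂μ i) l (𝓝 (∫ ω, g (Z ω) ∂μ')) :=
  (tendstoInDistribution_iff_tendsto_law hX hZ).trans <|
    ProbabilityMeasure.tendsto_iff_forall_integral_tendsto.trans <|
      forall_congr' fun g => tendsto_integral_map_iff hX hZ g.continuous

lemma tendstoInDistribution_iff_forall_lipschitz_integral_tendsto [PseudoEMetricSpace E]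
    [OpensMeasurableSpace E] [l.IsCountablyGenerated]
    (hX : ∀ i, AEMeasurable (X i) (μ i)) (hZ : AEMeasurable Z μ') :
    TendstoInDistribution X l Z μ μ' ↔
      ∀ g : E → ℝ, (∃ C, ∀ x y, dist (g x) (g y) ≤ C) → (∃ K, LipschitzWith K g) →
        Tendsto (fun i => ∫ ω, g (X i ω) ∂μ i) l (𝓝 (∫ ω, g (Z ω) ∂μ')) :=
  (tendstoInDistribution_iff_tendsto_law hX hZ).trans <|
    tendsto_iff_forall_lipschitz_integral_tendsto.trans <|
      forall₃_congr fun _ _ ⟨_, hg⟩ => tendsto_integral_map_iff hX hZ hg.continuous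

end TestFunctions

lemma equicontinuous_comp_of_uniformContinuous {ι X α β : Type*} [TopologicalSpace X]
    [UniformSpace α] [UniformSpace β] {φ : α → β} (hφ : UniformContinuous φ) {F : ι → X → α}
    (hF : Equicontinuous F) : Equicontinuous fun i x => φ (F i x) :=
  fun x _ hU => hF x _ (hφ hU)

section Equicontinuous

variable {ι X E Ω Ω' : Type*} [TopologicalSpace X] [NormedAddCommGroup E] [MeasurableSpace E]
  [BorelSpace E] [MeasurableSpace Ω] [MeasurableSpace Ω'] {μ : Measure Ω} [IsProbabilityMeasure μ]
  {μ' : Measure Ω'} [IsProbabilityMeasure μ'] {l : Filter ι} [l.IsCountablyGenerated]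
  {J : ι → X → Lp E 1 μ} {Jlim : X → Lp E 1 μ'}

lemma isClosed_setOf_tendstoInDistribution (hJ : Equicontinuous J) (hJlim : Continuous Jlim) :
    IsClosed {x | TendstoInDistribution (fun i => J i x) l (Jlim x) (fun _ => μ) μ'} := by
  simp only [tendstoInDistribution_iff_forall_lipschitz_integral_tendsto
    (fun _ => (Lp.aestronglyMeasurable _).aemeasurable) (Lp.aestronglyMeasurable _).aemeasurable,
    Set.ofPred_forall]
  refine isClosed_iInter fun g => isClosed_iInter fun _ => isClosed_iInter fun ⟨K, hg⟩ => ?_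
  have h_equi : Equicontinuous fun i x => ∫ ω, g (J i x ω) ∂μ :=
    equicontinuous_comp_of_uniformContinuous (lipschitzWith_integral_comp hg).uniformContinuous hJ
  have h_cont : Continuous fun x => ∫ ω, g (Jlim x ω) ∂μ' :=
    (lipschitzWith_integral_comp hg).continuous.comp hJlim
  exact h_equi.isClosed_setOfPred_tendsto h_cont

theorem stmt0_general (hJ : Equicontinuous J) (hJlim : Continuous Jlim) {D : Set X} (hD : Dense D)
    (hconv : ∀ x ∈ D, TendstoInDistribution (fun i => J i x) l (Jlim x) (fun _ => μ) μ') (x : X) :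
    TendstoInDistribution (fun i => J i x) l (Jlim x) (fun _ => μ) μ' :=
  (isClosed_setOf_tendstoInDistribution hJ hJlim).closure_subset_iff.2 hconv (hD x)

end Equicontinuous

/-- If `Jⁿ, J` are linear maps from a normed space `F` into `L¹(Ω)` with
uniformly bounded expectations `E[|Jⁿ f|] ≤ C‖f‖`, `E[|J f|] ≤ C‖f‖`, and `Jⁿ f → J f`
in distribution for `f` in a dense subset `D ⊆ F`, then `Jⁿ f → J f` in distribution
for every `f ∈ F`.  Convergence in distribution is phrased via bounded continuous
test functions. -/
theorem stmt0 {Ω : Type*} [MeasurableSpace Ω] (ℙ : Measure Ω) [IsProbabilityMeasure ℙ]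
    {F : Type*} [NormedAddCommGroup F] [NormedSpace ℝ F]
    (J : ℕ → F →ₗ[ℝ] Lp ℝ 1 ℙ) (Jlim : F →ₗ[ℝ] Lp ℝ 1 ℙ)
    (C : ℝ) (hC : 0 < C)
    (hJbound : ∀ (n : ℕ) (f : F), ∫ ω, |(J n f : Ω → ℝ) ω| ∂ℙ ≤ C * ‖f‖)
    (hJlimbound : ∀ f : F, ∫ ω, |(Jlim f : Ω → ℝ) ω| ∂ℙ ≤ C * ‖f‖)
    (D : Set F) (hD : Dense D)
    (hconv : ∀ f ∈ D, ∀ g : BoundedContinuousFunction ℝ ℝ,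
      Tendsto (fun n => ∫ ω, g ((J n f : Ω → ℝ) ω) ∂ℙ) atTop
        (𝓝 (∫ ω, g ((Jlim f : Ω → ℝ) ω) ∂ℙ))) :
    ∀ f : F, ∀ g : BoundedContinuousFunction ℝ ℝ,
      Tendsto (fun n => ∫ ω, g ((J n f : Ω → ℝ) ω) ∂ℙ) atTop
        (𝓝 (∫ ω, g ((Jlim f : Ω → ℝ) ω) ∂ℙ)) := by
  have hJ : Equicontinuous fun n f => J n f :=
    (LipschitzWith.uniformEquicontinuous _ C.toNNReal fun n =>
      lipschitzWith_of_integral_norm_le (J n) (hJbound n)).equicontinuous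
  have hJlim : Continuous Jlim := (lipschitzWith_of_integral_norm_le Jlim hJlimbound).continuous
  have h_iff (f : F) := tendstoInDistribution_iff_forall_integral_tendsto (l := atTop)
    (fun n => (Lp.aestronglyMeasurable (J n f)).aemeasurable)
    (Lp.aestronglyMeasurable (Jlim f)).aemeasurable
  exact fun f => (h_iff f).1 <|
    stmt0_general hJ hJlim hD (fun f hf => (h_iff f).2 (hconv f hf)) f
end

section
/- For every real α > 2 there exist constants β > 0 and C > 0 such that for all x, z ∈ [0,1]², (∫_{[0,1]²} | log|x − y| − log|z − y| |^α dy)^{1/α} ≤ C |x − z|^β. Moreover, one may take β = (α − ε)/α for any ε with α − 2/p < ε < α, where p > 1 is any exponent with α − 2/p > 0. -/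
open MeasureTheory

/-!
The values `log|x - y|` and `log|z - y|` differ by at most
`θ⁻¹ (|x - z| / min |x - y| |z - y|) ^ θ`, because `log (1 + t) ≤ t ^ θ / θ` for `0 < θ ≤ 1`.
Raising this to the power `α` bounds the `L^α` norm by `|x - z| ^ θ` times Riesz integrals
`∫ |x - y| ^ (-θ α) dy`. Over a set of finite measure these are bounded uniformly in the pole `x`
once `θ α` is smaller than the dimension: outside the unit ball around `x` the integrand is at
most `1`, and inside it translation moves the pole to the origin.
-/

lemma log_one_add_le_rpow_div {t θ : ℝ} (ht : 0 ≤ t) (hθ : 0 < θ) (hθ1 : θ ≤ 1) :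
    Real.log (1 + t) ≤ t ^ θ / θ := by
  have subadditive : (1 + t) ^ θ ≤ 1 + t ^ θ := by
    simpa using Real.rpow_add_le_add_rpow zero_le_one ht hθ.le hθ1
  rw [le_div_iff₀ hθ]
  calc Real.log (1 + t) * θ = Real.log ((1 + t) ^ θ) := by
        rw [Real.log_rpow (by positivity), mul_comm]
    _ ≤ (1 + t) ^ θ - 1 := Real.log_le_sub_one_of_pos (by positivity)
    _ ≤ t ^ θ := by linarith

lemma abs_log_sub_log_le_rpow_div {a b d θ : ℝ} (ha : 0 < a) (hb : 0 < b) (hd : |a - b| ≤ d)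
    (hθ : 0 < θ) (hθ1 : θ ≤ 1) :
    |Real.log a - Real.log b| ≤ (d / min a b) ^ θ / θ := by
  wlog hab : a ≤ b generalizing a b
  · rw [abs_sub_comm, min_comm]
    exact this hb ha (by rwa [abs_sub_comm]) (le_of_not_ge hab)
  have hd0 : 0 ≤ d := (abs_nonneg _).trans hd
  have ratio_le : b / a ≤ 1 + d / a := by
    rw [div_le_iff₀ ha, add_mul, div_mul_cancel₀ _ ha.ne']
    linarith [neg_abs_le (a - b)]
  rw [min_eq_left hab, abs_sub_comm, abs_of_nonneg (sub_nonneg.2 (Real.log_le_log ha hab))]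
  calc Real.log b - Real.log a = Real.log (b / a) := (Real.log_div hb.ne' ha.ne').symm
    _ ≤ Real.log (1 + d / a) := Real.log_le_log (by positivity) ratio_le
    _ ≤ (d / a) ^ θ / θ := log_one_add_le_rpow_div (by positivity) hθ hθ1

section PseudoMetricSpace

variable {X : Type*} [PseudoMetricSpace X] {α θ : ℝ}

-- At the poles `y = x` and `y = z`, where `Real.log 0 = 0`, the right-hand side is `⊤` unless
-- `dist x z = 0`, so no null set has to be excluded.
lemma enorm_log_dist_sub_log_dist_le (x y z : X) (hθ : 0 < θ) (hθ1 : θ ≤ 1) :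
    ‖Real.log (dist x y) - Real.log (dist z y)‖ₑ ≤
      ENNReal.ofReal θ⁻¹ * edist x z ^ θ * min (edist x y) (edist z y) ^ (-θ) := by
  rcases eq_or_ne (dist x z) 0 with hxz | hxz
  · have same_dist : dist x y = dist z y := by
      simpa [hxz, sub_eq_zero] using abs_dist_sub_le x z y
    simp [same_dist]
  rcases eq_or_ne (min (dist x y) (dist z y)) 0 with hmin | hmin
  · have right_eq_top : ENNReal.ofReal θ⁻¹ * edist x z ^ θ *
        min (edist x y) (edist z y) ^ (-θ) = ⊤ := by
      have hne : ENNReal.ofReal θ⁻¹ * edist x z ^ θ ≠ 0 := by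
        simp [edist_dist, hθ, hxz.symm.lt_of_le dist_nonneg, ENNReal.rpow_eq_zero_iff]
      rw [edist_dist x y, edist_dist z y, ← ENNReal.ofReal_min, hmin, ENNReal.ofReal_zero,
        ENNReal.zero_rpow_of_neg (neg_lt_zero.2 hθ), ENNReal.mul_top hne]
    exact right_eq_top ▸ le_top
  · have hpos : 0 < min (dist x y) (dist z y) :=
      hmin.symm.lt_of_le (le_min dist_nonneg dist_nonneg)
    have real_bound := abs_log_sub_log_le_rpow_div (lt_min_iff.1 hpos).1 (lt_min_iff.1 hpos).2
      (abs_dist_sub_le x z y) hθ hθ1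
    rw [Real.enorm_eq_ofReal_abs, edist_dist x y, edist_dist z y, edist_dist x z,
      ← ENNReal.ofReal_min, ENNReal.ofReal_rpow_of_nonneg dist_nonneg hθ.le,
      ENNReal.ofReal_rpow_of_pos hpos, ← ENNReal.ofReal_mul (by positivity),
      ← ENNReal.ofReal_mul (by positivity)]
    refine ENNReal.ofReal_le_ofReal (real_bound.trans_eq ?_)
    rw [Real.div_rpow dist_nonneg hpos.le, Real.rpow_neg hpos.le]
    ring

lemma min_rpow_le_add_rpow (a b : ENNReal) (r : ℝ) : min a b ^ r ≤ a ^ r + b ^ r := by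
  rcases min_choice a b with h | h <;> rw [h]
  exacts [le_self_add, le_add_self]

theorem eLpNorm_log_dist_sub_log_dist_le [MeasurableSpace X] [OpensMeasurableSpace X]
    (μ : Measure X) (x z : X) (hα : 0 < α) (hθ : 0 < θ) (hθ1 : θ ≤ 1) :
    eLpNorm (fun y => Real.log (dist x y) - Real.log (dist z y)) (ENNReal.ofReal α) μ ≤
      ENNReal.ofReal θ⁻¹ * edist x z ^ θ *
        (∫⁻ y, edist x y ^ (-(θ * α)) ∂μ + ∫⁻ y, edist z y ^ (-(θ * α)) ∂μ) ^ (1 / α) := by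
  set K := ENNReal.ofReal θ⁻¹ * edist x z ^ θ
  have hK : K ^ α ≠ ⊤ := by
    have : K ≠ ⊤ := by finiteness
    finiteness
  have pointwise (y : X) : ‖Real.log (dist x y) - Real.log (dist z y)‖ₑ ^ α ≤
      K ^ α * (edist x y ^ (-(θ * α)) + edist z y ^ (-(θ * α))) := calc
    _ ≤ (K * min (edist x y) (edist z y) ^ (-θ)) ^ α :=
      ENNReal.rpow_le_rpow (enorm_log_dist_sub_log_dist_le x y z hθ hθ1) hα.le
    _ = K ^ α * min (edist x y) (edist z y) ^ (-(θ * α)) := by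
      rw [ENNReal.mul_rpow_of_nonneg _ _ hα.le, ← ENNReal.rpow_mul, neg_mul]
    _ ≤ _ := by gcongr; exact min_rpow_le_add_rpow _ _ _
  rw [eLpNorm_eq_lintegral_rpow_enorm_toReal (by simpa using hα) ENNReal.ofReal_ne_top,
    ENNReal.toReal_ofReal hα.le]
  calc _ ≤ (∫⁻ y, K ^ α * (edist x y ^ (-(θ * α)) + edist z y ^ (-(θ * α))) ∂μ) ^ (1 / α) := by
        gcongr with y
        exact pointwise y
    _ = _ := by
      rw [lintegral_const_mul' _ _ hK, lintegral_add_left (by fun_prop),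
        ENNReal.mul_rpow_of_nonneg _ _ (by positivity), ← ENNReal.rpow_mul,
        mul_one_div_cancel hα.ne', ENNReal.rpow_one]

end PseudoMetricSpace

section RieszIntegral

variable {E : Type*} [NormedAddCommGroup E] [MeasurableSpace E] [BorelSpace E] (μ : Measure E)
  {γ : ℝ}

theorem setLIntegral_edist_rpow_neg_le [μ.IsAddRightInvariant] (s : Set E) (x : E) (hγ : 0 ≤ γ) :
    ∫⁻ y in s, edist x y ^ (-γ) ∂μ ≤ μ s + ∫⁻ y in Metric.ball 0 1, ‖y‖ₑ ^ (-γ) ∂μ := by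
  set f : E → ENNReal := (Metric.ball 0 1).indicator fun y => ‖y‖ₑ ^ (-γ)
  have near_or_far (y : E) : edist x y ^ (-γ) ≤ 1 + f (y - x) := by
    rw [edist_comm, edist_eq_enorm_sub]
    by_cases hy : y - x ∈ Metric.ball (0 : E) 1
    · simp only [f, Set.indicator_of_mem hy, le_add_self]
    · have one_le : 1 ≤ ‖y - x‖ₑ := by
        simpa [← ofReal_norm] using hy
      rw [ENNReal.rpow_neg]
      exact le_add_right (ENNReal.inv_le_one.2 (by simpa using ENNReal.rpow_le_rpow one_le hγ))
  calc ∫⁻ y in s, edist x y ^ (-γ) ∂μ ≤ ∫⁻ y in s, 1 + f (y - x) ∂μ := lintegral_mono near_or_far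
    _ = μ s + ∫⁻ y in s, f (y - x) ∂μ := by
      rw [lintegral_add_left measurable_const, setLIntegral_one]
    _ ≤ μ s + ∫⁻ y, f (y - x) ∂μ := by gcongr; exact Measure.restrict_le_self
    _ = μ s + ∫⁻ y in Metric.ball 0 1, ‖y‖ₑ ^ (-γ) ∂μ := by
      rw [lintegral_sub_right_eq_self f x, lintegral_indicator Metric.isOpen_ball.measurableSet]

theorem setLIntegral_ball_enorm_rpow_neg_lt_top [NormedSpace ℝ E] [FiniteDimensional ℝ E]
    [Nontrivial E] [μ.IsAddHaarMeasure] (hγ : γ < Module.finrank ℝ E) (r : ℝ) :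
    ∫⁻ y in Metric.ball 0 r, ‖y‖ₑ ^ (-γ) ∂μ < ⊤ := by
  have integrable : IntegrableOn (fun y : E => ‖y‖ ^ (-γ)) (Metric.ball 0 r) μ :=
    integrableOn_ball_of_norm_le_rpow (C := 1) Module.finrank_pos hγ
      (.of_forall fun y => by simp [abs_of_nonneg (Real.rpow_nonneg (norm_nonneg y) _)])
      (measurable_norm.pow_const _).aestronglyMeasurable
  refine (lintegral_congr_ae (ae_restrict_of_ae ?_)).trans_lt integrable.lintegral_lt_top
  filter_upwards [Measure.ae_ne μ 0] with y hy
  rw [← ofReal_norm, ENNReal.ofReal_rpow_of_pos (norm_pos_iff.2 hy)]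

end RieszIntegral

theorem stmt6_general {E : Type*} [NormedAddCommGroup E] [NormedSpace ℝ E]
    [FiniteDimensional ℝ E] [MeasurableSpace E] [BorelSpace E] (μ : Measure E)
    [μ.IsAddHaarMeasure] {s : Set E} (hs : μ s ≠ ⊤) {α θ : ℝ} (hα : 0 < α) (hθ : 0 < θ)
    (hθ1 : θ ≤ 1) (hdim : θ * α < Module.finrank ℝ E) :
    ∃ C : ℝ, 0 < C ∧ ∀ x z : E,
      eLpNorm (fun y => Real.log ‖x - y‖ - Real.log ‖z - y‖) (ENNReal.ofReal α) (μ.restrict s)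
        ≤ ENNReal.ofReal (C * ‖x - z‖ ^ θ) := by
  have hθα : 0 < θ * α := by positivity
  have : Nontrivial E :=
    Module.nontrivial_of_finrank_pos (R := ℝ) (by exact_mod_cast hθα.trans hdim)
  set A := μ s + ∫⁻ y in Metric.ball 0 1, ‖y‖ₑ ^ (-(θ * α)) ∂μ
  have hA : A ≠ ⊤ :=
    ENNReal.add_ne_top.2 ⟨hs, (setLIntegral_ball_enorm_rpow_neg_lt_top μ hdim 1).ne⟩
  set K := ENNReal.ofReal θ⁻¹ * (A + A) ^ (1 / α)
  have hK : K ≠ ⊤ := by finiteness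
  refine ⟨K.toReal + 1, by positivity, fun x z => ?_⟩
  simp only [← dist_eq_norm]
  calc _ ≤ ENNReal.ofReal θ⁻¹ * edist x z ^ θ * (A + A) ^ (1 / α) := by
        refine (eLpNorm_log_dist_sub_log_dist_le _ x z hα hθ hθ1).trans ?_
        gcongr <;> exact setLIntegral_edist_rpow_neg_le μ s _ hθα.le
    _ = ENNReal.ofReal K.toReal * edist x z ^ θ := by
      rw [ENNReal.ofReal_toReal hK, mul_right_comm]
    _ ≤ ENNReal.ofReal (K.toReal + 1) * edist x z ^ θ := by
      gcongr
      linarith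
    _ = ENNReal.ofReal ((K.toReal + 1) * dist x z ^ θ) := by
      rw [ENNReal.ofReal_mul (by positivity), edist_dist,
        ENNReal.ofReal_rpow_of_nonneg dist_nonneg hθ.le]

theorem exists_eLpNorm_log_sqrt_sum_sub_log_sqrt_sum_le {ι : Type*} [Fintype ι]
    {s : Set (ι → ℝ)} (hs : volume s ≠ ⊤) {α θ : ℝ} (hα : 0 < α) (hθ : 0 < θ) (hθ1 : θ ≤ 1)
    (hdim : θ * α < Fintype.card ι) :
    ∃ C : ℝ, 0 < C ∧ ∀ x z : ι → ℝ,
      eLpNorm (fun y : ι → ℝ => Real.log (Real.sqrt (∑ i, (x i - y i) ^ 2)) -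
          Real.log (Real.sqrt (∑ i, (z i - y i) ^ 2))) (ENNReal.ofReal α) (volume.restrict s)
        ≤ ENNReal.ofReal (C * Real.sqrt (∑ i, (x i - z i) ^ 2) ^ θ) := by
  have norm_toLp (u v : ι → ℝ) :
      ‖WithLp.toLp 2 u - WithLp.toLp 2 v‖ = Real.sqrt (∑ i, (u i - v i) ^ 2) := by
    simp [EuclideanSpace.norm_eq]
  have embedding : MeasurableEmbedding (WithLp.toLp 2 : (ι → ℝ) → EuclideanSpace ℝ ι) :=
    (MeasurableEquiv.toLp 2 (ι → ℝ)).measurableEmbedding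
  have preserving := (PiLp.volume_preserving_toLp ι).restrict_image_emb embedding s
  obtain ⟨C, hC, bound⟩ := stmt6_general (E := EuclideanSpace ℝ ι) volume
    (s := WithLp.toLp 2 '' s)
    (by rwa [← (PiLp.volume_preserving_toLp ι).measure_preimage_emb embedding,
      Set.preimage_image_eq _ embedding.injective])
    hα hθ hθ1 (by simpa using hdim)
  refine ⟨C, hC, fun x z => ?_⟩
  have := bound (WithLp.toLp 2 x) (WithLp.toLp 2 z)
  rw [← preserving.map_eq, embedding.eLpNorm_map_measure] at this
  simpa only [Function.comp_def, norm_toLp] using this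

/-- For every `α > 2` the free-space Green kernel of the Laplacian in
dimension 2 is Hölder continuous from `[0,1]²` into `L^α([0,1]²)`: there are `β, C > 0`
with `‖log|x − ·| − log|z − ·|‖_{L^α([0,1]²)} ≤ C |x − z|^β`; moreover one may take
`β = (α − ε)/α` for any `ε` with `α − 2/p < ε < α`, `p > 1`, `α − 2/p > 0`. -/
theorem stmt6 (α : ℝ) (hα : 2 < α) :
    (∃ β : ℝ, 0 < β ∧ ∃ C : ℝ, 0 < C ∧
      ∀ x ∈ Set.Icc (0 : Fin 2 → ℝ) 1, ∀ z ∈ Set.Icc (0 : Fin 2 → ℝ) 1,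
        eLpNorm (fun y : Fin 2 → ℝ =>
            Real.log (Real.sqrt (∑ i, (x i - y i) ^ 2)) -
              Real.log (Real.sqrt (∑ i, (z i - y i) ^ 2)))
          (ENNReal.ofReal α) (volume.restrict (Set.Icc (0 : Fin 2 → ℝ) 1))
        ≤ ENNReal.ofReal (C * Real.sqrt (∑ i, (x i - z i) ^ 2) ^ β)) ∧
    (∀ p : ℝ, 1 < p → 0 < α - 2 / p → ∀ ε : ℝ, α - 2 / p < ε → ε < α →
      ∃ C : ℝ, 0 < C ∧
        ∀ x ∈ Set.Icc (0 : Fin 2 → ℝ) 1, ∀ z ∈ Set.Icc (0 : Fin 2 → ℝ) 1,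
          eLpNorm (fun y : Fin 2 → ℝ =>
              Real.log (Real.sqrt (∑ i, (x i - y i) ^ 2)) -
                Real.log (Real.sqrt (∑ i, (z i - y i) ^ 2)))
            (ENNReal.ofReal α) (volume.restrict (Set.Icc (0 : Fin 2 → ℝ) 1))
          ≤ ENNReal.ofReal (C * Real.sqrt (∑ i, (x i - z i) ^ 2) ^ ((α - ε) / α))) := by
  have hα0 : 0 < α := by linarith
  have key {θ : ℝ} (hθ : 0 < θ) (hθα : θ * α < 2) :=
    exists_eLpNorm_log_sqrt_sum_sub_log_sqrt_sum_le (s := Set.Icc (0 : Fin 2 → ℝ) 1)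
      isCompact_Icc.measure_lt_top.ne hα0 hθ (by nlinarith) (by simpa using hθα)
  refine ⟨⟨1 / α, by positivity, ?_⟩, fun p hp _ ε hε hεα => ?_⟩
  · obtain ⟨C, hC, bound⟩ := key (θ := 1 / α) (by positivity) (by simp [hα0.ne'])
    exact ⟨C, hC, fun x _ z _ => bound x z⟩
  · have hp2 : 2 / p < 2 := div_lt_self two_pos hp
    obtain ⟨C, hC, bound⟩ := key (θ := (α - ε) / α) (div_pos (sub_pos.2 hεα) hα0)
      (by rw [div_mul_cancel₀ _ hα0.ne']; linarith)
    exact ⟨C, hC, fun x _ z _ => bound x z⟩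
end

section
/- For every real α with 2 < α < 9/4 there exist constants β > 0 and C > 0 such that for all x, z ∈ [0,1]³, (∫_{[0,1]³} | |x − y|^{−1} − |z − y|^{−1} |^α dy)^{1/α} ≤ C |x − z|^β. -/
open MeasureTheory
open scoped ENNReal Pointwise

/-!
Interpolating `|a - b| ≤ max a b` with exponent `1 - β` against `|a - b|` with exponent `β` gives
`|a⁻¹ - b⁻¹| ≤ |a - b| ^ β * (a ^ (-(1 + β)) + b ^ (-(1 + β)))` for nonnegative `a` and `b`. For
`a = ‖x - y‖` and `b = ‖z - y‖` the first factor is at most `‖x - z‖ ^ β`. The two singular terms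
are translates of `‖·‖ ^ (-(1 + β))`, which is in `L^p` on bounded sets as long as `(1 + β) * p` is
less than the dimension. In dimension `3` with `p < 9 / 4` the exponent `β = 1 / 3` is admissible.
-/

section Pointwise

variable {β : ℝ}

lemma inv_sub_inv_le_rpow_mul_rpow (hβ₀ : 0 ≤ β) (hβ₁ : β ≤ 1) {a b : ℝ} (ha : 0 < a)
    (hab : a ≤ b) : a⁻¹ - b⁻¹ ≤ (b - a) ^ β * a ^ (-(1 + β)) := by
  have hb : 0 < b := ha.trans_le hab
  have hba : 0 ≤ b - a := sub_nonneg.2 hab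
  have interpolation : b - a ≤ (b - a) ^ β * b ^ (1 - β) :=
    calc b - a = (b - a) ^ β * (b - a) ^ (1 - β) := by
          rw [← Real.rpow_add_of_nonneg hba hβ₀ (sub_nonneg.2 hβ₁), add_sub_cancel, Real.rpow_one]
      _ ≤ (b - a) ^ β * b ^ (1 - β) := by
          gcongr
          linarith
  calc a⁻¹ - b⁻¹ = (b - a) * b⁻¹ * a⁻¹ := by field_simp
    _ ≤ (b - a) ^ β * b ^ (1 - β) * b⁻¹ * a⁻¹ := by gcongr
    _ = (b - a) ^ β * (b ^ (-β) * a⁻¹) := by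
        rw [sub_eq_neg_add 1, Real.rpow_add_one hb.ne']
        field_simp
    _ ≤ (b - a) ^ β * (a ^ (-β) * a⁻¹) := by
        gcongr _ * (?_ * _)
        exact Real.rpow_le_rpow_of_nonpos ha hab (neg_nonpos.2 hβ₀)
    _ = (b - a) ^ β * a ^ (-(1 + β)) := by
        rw [neg_add_rev, Real.rpow_add ha, Real.rpow_neg_one]

lemma abs_inv_sub_inv_le_rpow_mul_add (hβ₀ : 0 ≤ β) (hβ₁ : β ≤ 1) {a b : ℝ} (ha : 0 ≤ a)
    (hb : 0 ≤ b) : |a⁻¹ - b⁻¹| ≤ |a - b| ^ β * (a ^ (-(1 + β)) + b ^ (-(1 + β))) := by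
  wlog hab : a ≤ b generalizing a b
  · rw [abs_sub_comm, abs_sub_comm a, add_comm]
    exact this hb ha (le_of_not_ge hab)
  rw [abs_sub_comm a, abs_of_nonneg (sub_nonneg.2 hab)]
  rcases ha.eq_or_lt with rfl | ha
  · have hb_rpow : b ^ β * b ^ (-(1 + β)) = b⁻¹ := by
      rw [← Real.rpow_add' hb (by norm_num), show β + -(1 + β) = -1 by ring, Real.rpow_neg_one]
    rw [inv_zero, zero_sub, abs_neg, abs_of_nonneg (inv_nonneg.2 hb), sub_zero, ← hb_rpow]
    gcongr
    exact le_add_of_nonneg_left (by positivity)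
  · rw [abs_of_nonneg (sub_nonneg.2 (inv_anti₀ ha hab)), mul_add]
    exact le_add_of_le_of_nonneg (inv_sub_inv_le_rpow_mul_rpow hβ₀ hβ₁ ha hab) (by positivity)

lemma abs_inv_norm_sub_inv_norm_le {E : Type*} [SeminormedAddCommGroup E] (hβ₀ : 0 ≤ β)
    (hβ₁ : β ≤ 1) (u v : E) :
    |‖u‖⁻¹ - ‖v‖⁻¹| ≤ ‖u - v‖ ^ β * (‖u‖ ^ (-(1 + β)) + ‖v‖ ^ (-(1 + β))) := by
  refine (abs_inv_sub_inv_le_rpow_mul_add hβ₀ hβ₁ (norm_nonneg u) (norm_nonneg v)).trans ?_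
  gcongr
  exact abs_norm_sub_norm_le u v

end Pointwise

lemma eLpNorm_comp_sub_left_restrict_le {G F : Type*} [AddGroup G] [MeasurableSpace G]
    [MeasurableAdd G] [MeasurableNeg G] [NormedAddCommGroup F] {μ : Measure G}
    [μ.IsAddLeftInvariant] [μ.IsNegInvariant] (f : G → F) (p : ℝ≥0∞) {s t : Set G} {x : G}
    (hst : ∀ y ∈ s, x - y ∈ t) :
    eLpNorm (fun y ↦ f (x - y)) p (μ.restrict s) ≤ eLpNorm f p (μ.restrict t) := by
  have emb : MeasurableEmbedding (x - ·) := (MeasurableEquiv.subLeft x).measurableEmbedding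
  have mp := (Measure.measurePreserving_sub_left μ x).restrict_preimage_emb emb t
  calc eLpNorm (fun y ↦ f (x - y)) p (μ.restrict s)
      ≤ eLpNorm (f ∘ (x - ·)) p (μ.restrict ((x - ·) ⁻¹' t)) :=
        eLpNorm_mono_measure _ (Measure.restrict_mono hst le_rfl)
    _ = eLpNorm f p (μ.restrict t) := by rw [← emb.eLpNorm_map_measure, mp.map_eq]

section NormedSpace

variable {E : Type*} [NormedAddCommGroup E] [MeasurableSpace E] [BorelSpace E] {μ : Measure E}
  {β : ℝ} {p : ℝ≥0∞} {s : Set E}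

lemma eLpNorm_inv_norm_sub_sub_inv_norm_sub_le [μ.IsAddLeftInvariant] [μ.IsNegInvariant]
    (hβ₀ : 0 ≤ β) (hβ₁ : β ≤ 1) {x z : E} (hx : x ∈ s) (hz : z ∈ s) :
    eLpNorm (fun y ↦ ‖x - y‖⁻¹ - ‖z - y‖⁻¹) p (μ.restrict s) ≤
      ENNReal.ofReal (‖x - z‖ ^ β) *
        (ENNReal.LpAddConst p *
          (2 * eLpNorm (fun w ↦ ‖w‖ ^ (-(1 + β))) p (μ.restrict (s - s)))) := by
  set k : E → ℝ := fun w ↦ ‖w‖ ^ (-(1 + β))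
  have k_translate_meas (v : E) : AEStronglyMeasurable (fun y ↦ k (v - y)) (μ.restrict s) :=
    Measurable.aestronglyMeasurable (by fun_prop)
  have k_translate_le {v : E} (hv : v ∈ s) :
      eLpNorm (fun y ↦ k (v - y)) p (μ.restrict s) ≤ eLpNorm k p (μ.restrict (s - s)) :=
    eLpNorm_comp_sub_left_restrict_le k p fun y hy ↦ Set.sub_mem_sub hv hy
  calc eLpNorm (fun y ↦ ‖x - y‖⁻¹ - ‖z - y‖⁻¹) p (μ.restrict s)
      ≤ eLpNorm (‖x - z‖ ^ β • ((fun y ↦ k (x - y)) + fun y ↦ k (z - y))) p (μ.restrict s) := by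
        refine eLpNorm_mono_real fun y ↦ ?_
        simpa only [sub_sub_sub_cancel_right, Real.norm_eq_abs, Pi.smul_apply, Pi.add_apply,
          smul_eq_mul] using
          abs_inv_norm_sub_inv_norm_le hβ₀ hβ₁ (x - y) (z - y)
    _ = ENNReal.ofReal (‖x - z‖ ^ β) *
          eLpNorm ((fun y ↦ k (x - y)) + fun y ↦ k (z - y)) p (μ.restrict s) := by
        rw [eLpNorm_const_smul, Real.enorm_of_nonneg (by positivity)]
    _ ≤ ENNReal.ofReal (‖x - z‖ ^ β) *
          (ENNReal.LpAddConst p * (2 * eLpNorm k p (μ.restrict (s - s)))) := by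
        gcongr
        rw [two_mul]
        refine (eLpNorm_add_le' (k_translate_meas x) (k_translate_meas z) p).trans ?_
        gcongr
        · exact k_translate_le hx
        · exact k_translate_le hz

variable [NormedSpace ℝ E] [FiniteDimensional ℝ E] [μ.IsAddHaarMeasure]

lemma memLp_norm_rpow_neg_restrict_of_isBounded (hp₀ : p ≠ 0) (hp : p ≠ ∞) {γ : ℝ} (hγ : 0 ≤ γ)
    (hγp : γ * p.toReal < Module.finrank ℝ E) (hs : Bornology.IsBounded s) :
    MemLp (fun w : E ↦ ‖w‖ ^ (-γ)) p (μ.restrict s) := by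
  have meas : Measurable fun w : E ↦ ‖w‖ ^ (-γ) := by fun_prop
  have finrank_pos : (0 : ℝ) < Module.finrank ℝ E := lt_of_le_of_lt (by positivity) hγp
  obtain ⟨R, hsR⟩ := hs.subset_ball 0
  rw [← integrable_norm_rpow_iff meas.aestronglyMeasurable hp₀ hp]
  refine IntegrableOn.mono_set (integrableOn_ball_of_norm_le_rpow (C := 1)
    (by exact_mod_cast finrank_pos) hγp (.of_forall fun w ↦ le_of_eq ?_)
    (meas.norm.pow_const _).aestronglyMeasurable) hsR
  rw [Real.norm_of_nonneg (by positivity), Real.norm_of_nonneg (by positivity),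
    ← Real.rpow_mul (norm_nonneg w), neg_mul, one_mul]

theorem exists_eLpNorm_inv_norm_sub_sub_inv_norm_sub_le (hβ₀ : 0 ≤ β) (hβ₁ : β ≤ 1) (hp₀ : p ≠ 0)
    (hp : p ≠ ∞) (hβp : (1 + β) * p.toReal < Module.finrank ℝ E) (hs : Bornology.IsBounded s) :
    ∃ C : ℝ, 0 < C ∧ ∀ x ∈ s, ∀ z ∈ s,
      eLpNorm (fun y ↦ ‖x - y‖⁻¹ - ‖z - y‖⁻¹) p (μ.restrict s) ≤
        ENNReal.ofReal (C * ‖x - z‖ ^ β) := by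
  set K := ENNReal.LpAddConst p * (2 * eLpNorm (fun w ↦ ‖w‖ ^ (-(1 + β))) p (μ.restrict (s - s)))
  have singular_memLp : MemLp (fun w : E ↦ ‖w‖ ^ (-(1 + β))) p (μ.restrict (s - s)) :=
    memLp_norm_rpow_neg_restrict_of_isBounded hp₀ hp (by linarith) hβp (hs.sub hs)
  have hK : K < ∞ := ENNReal.mul_lt_top (ENNReal.LpAddConst_lt_top p)
    (ENNReal.mul_lt_top ENNReal.ofNat_lt_top singular_memLp.eLpNorm_lt_top)
  refine ⟨K.toReal + 1, by positivity, fun x hx z hz ↦ ?_⟩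
  rw [mul_comm, ENNReal.ofReal_mul (by positivity)]
  refine (eLpNorm_inv_norm_sub_sub_inv_norm_sub_le hβ₀ hβ₁ hx hz).trans ?_
  gcongr
  exact (ENNReal.le_ofReal_iff_toReal_le hK.ne (by positivity)).2 (by linarith)

end NormedSpace

lemma sqrt_sum_sub_sq_eq_norm_toLp_sub {ι : Type*} [Fintype ι] (u v : ι → ℝ) :
    √(∑ i, (u i - v i) ^ 2) = ‖WithLp.toLp 2 u - WithLp.toLp 2 v‖ := by
  simp [EuclideanSpace.norm_eq]

lemma eLpNorm_comp_toLp_restrict {ι F : Type*} [Fintype ι] [NormedAddCommGroup F]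
    (f : EuclideanSpace ℝ ι → F) (p : ℝ≥0∞) (s : Set (ι → ℝ)) :
    eLpNorm (fun y ↦ f (WithLp.toLp 2 y)) p (volume.restrict s) =
      eLpNorm f p (volume.restrict (WithLp.ofLp ⁻¹' s)) := by
  have emb := (MeasurableEquiv.toLp 2 (ι → ℝ)).measurableEmbedding
  have mp := (PiLp.volume_preserving_toLp ι).restrict_preimage_emb emb (WithLp.ofLp ⁻¹' s)
  rw [← mp.map_eq]
  exact emb.eLpNorm_map_measure.symm

theorem stmt7_general {ι : Type*} [Fintype ι] {α β : ℝ} (hα : 0 < α) (hβ₀ : 0 ≤ β) (hβ₁ : β ≤ 1)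
    (hαβ : (1 + β) * α < Fintype.card ι) {s : Set (ι → ℝ)} (hs : Bornology.IsBounded s) :
    ∃ C : ℝ, 0 < C ∧ ∀ x ∈ s, ∀ z ∈ s,
      eLpNorm (fun y : ι → ℝ ↦ (√(∑ i, (x i - y i) ^ 2))⁻¹ - (√(∑ i, (z i - y i) ^ 2))⁻¹)
        (ENNReal.ofReal α) (volume.restrict s) ≤
      ENNReal.ofReal (C * √(∑ i, (x i - z i) ^ 2) ^ β) := by
  have hs_bdd : Bornology.IsBounded (WithLp.ofLp ⁻¹' s : Set (EuclideanSpace ℝ ι)) :=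
    (PiLp.antilipschitzWith_ofLp 2 fun _ ↦ ℝ).isBounded_preimage hs
  have hdim : (1 + β) * (ENNReal.ofReal α).toReal < Module.finrank ℝ (EuclideanSpace ℝ ι) := by
    rwa [ENNReal.toReal_ofReal hα.le, finrank_euclideanSpace]
  obtain ⟨C, hC, holder⟩ := exists_eLpNorm_inv_norm_sub_sub_inv_norm_sub_le (μ := volume)
    hβ₀ hβ₁ (ENNReal.ofReal_pos.2 hα).ne' ENNReal.ofReal_ne_top hdim hs_bdd
  refine ⟨C, hC, fun x hx z hz ↦ ?_⟩
  simp only [sqrt_sum_sub_sq_eq_norm_toLp_sub]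
  have holder_xz := holder (WithLp.toLp 2 x) hx (WithLp.toLp 2 z) hz
  rw [← eLpNorm_comp_toLp_restrict] at holder_xz
  exact holder_xz

/-- For every `2 < α < 9/4` the free-space Green kernel of the Laplacian
in dimension 3 is Hölder continuous from `[0,1]³` into `L^α([0,1]³)`: there are
`β, C > 0` with `‖|x − ·|⁻¹ − |z − ·|⁻¹‖_{L^α([0,1]³)} ≤ C |x − z|^β`. -/
theorem stmt7 (α : ℝ) (hα₁ : 2 < α) (hα₂ : α < 9 / 4) :
    ∃ β : ℝ, 0 < β ∧ ∃ C : ℝ, 0 < C ∧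
      ∀ x ∈ Set.Icc (0 : Fin 3 → ℝ) 1, ∀ z ∈ Set.Icc (0 : Fin 3 → ℝ) 1,
        eLpNorm (fun y : Fin 3 → ℝ =>
            (Real.sqrt (∑ i, (x i - y i) ^ 2))⁻¹ - (Real.sqrt (∑ i, (z i - y i) ^ 2))⁻¹)
          (ENNReal.ofReal α) (volume.restrict (Set.Icc (0 : Fin 3 → ℝ) 1))
        ≤ ENNReal.ofReal (C * Real.sqrt (∑ i, (x i - z i) ^ 2) ^ β) := by
  exact ⟨1 / 3, by norm_num, stmt7_general (by linarith) (by norm_num) (by norm_num)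
    (by norm_num; linarith) (Metric.isBounded_Icc 0 1)⟩
end
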